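/- arXiv:2105.09037 — 2 statements merged into one kernel-verified Lean document; each statement's English description precedes it below -/
import Mathlib

section
/- For every behaviour P with M settings, the measure of free choice μ_F(P) equals the supremum of p ∈ [0,1] such that P decomposes pointwise as P = p·P_F + (1−p)·Q, where P_F is a behaviour admitting an LHV+FHV model and Q is a behaviour admitting an LHV model with respect to some full-support setting distribution. -/
/-! The supremum of the free weights over LHV models with a fixed setting distribution equals the
supremum of the decomposition weights, so it does not depend on the setting distribution.

Given an LHV model of free weight `w`, every conditional distribution `q(·|x,y)` dominates the
restriction of `q` to the free points. Normalising this restriction, of mass `w`, and what it leaves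
of `q(·|x,y)`, of mass `1 - w`, gives `q(·|x,y) = w q₁ + (1 - w) q₂(·|x,y)` with `q₁` independent of
the settings. Keeping the local responses, `q₁` produces `P_F` and `q₂` produces `Q`.

Conversely, locality constrains only the responses, so an LHV model of `Q` remains one for any other
setting distribution once the marginal `q` is recomputed. Put side by side with a local-free model
of `P_F`, in proportion `1 - p` to `p`, it gives an LHV model of `P` in which all points coming from
`P_F` are free. -/

open scoped BigOperators Classical
open Finset

noncomputable section

/-- The real value `±1` associated with a Boolean outcome. -/
def outVal (a : Bool) : ℝ := if a then 1 else -1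

/-- A behaviour: nonnegative probabilities summing to one for every pair of settings. -/
def IsBehaviour {M N : ℕ} (P : Bool → Bool → Fin M → Fin N → ℝ) : Prop :=
  (∀ a b x y, 0 ≤ P a b x y) ∧ (∀ x y, ∑ a, ∑ b, P a b x y = 1)

/-- A full-support probability distribution on pairs of settings. -/
def IsSettingDist {M : ℕ} (p : Fin M → Fin M → ℝ) : Prop :=
  (∀ x y, 0 < p x y) ∧ ∑ x, ∑ y, p x y = 1

/-- A hidden-variable model of the behaviour `P` with setting distribution `p`,
with finite hidden-variable space `Fin n`. -/
structure HVModel (M : ℕ) (P : Bool → Bool → Fin M → Fin M → ℝ)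
    (p : Fin M → Fin M → ℝ) where
  n : ℕ
  q : Fin n → ℝ
  q_nonneg : ∀ l, 0 ≤ q l
  q_sum : ∑ l, q l = 1
  qc : Fin M → Fin M → Fin n → ℝ
  qc_nonneg : ∀ x y l, 0 ≤ qc x y l
  qc_sum : ∀ x y, ∑ l, qc x y l = 1
  q_marg : ∀ l, q l = ∑ x, ∑ y, qc x y l * p x y
  Pc : Fin n → Bool → Bool → Fin M → Fin M → ℝ
  Pc_nonneg : ∀ l a b x y, 0 ≤ Pc l a b x y
  Pc_sum : ∀ l x y, ∑ a, ∑ b, Pc l a b x y = 1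
  reproduce : ∀ a b x y, P a b x y = ∑ l, Pc l a b x y * qc x y l

namespace HVModel

variable {M : ℕ} {P : Bool → Bool → Fin M → Fin M → ℝ} {p : Fin M → Fin M → ℝ}

/-- A hidden variable is local if the conditional outcome distribution factorises. -/
def IsLocalPoint (N : HVModel M P p) (l : Fin N.n) : Prop :=
  ∃ α β : Bool → Fin M → ℝ,
    (∀ a x, 0 ≤ α a x) ∧ (∀ x, ∑ a, α a x = 1) ∧
    (∀ b y, 0 ≤ β b y) ∧ (∀ y, ∑ b, β b y = 1) ∧
    (∀ a b x y, N.Pc l a b x y = α a x * β b y)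

/-- A hidden variable is free if it is independent of the settings. -/
def IsFreePoint (N : HVModel M P p) (l : Fin N.n) : Prop :=
  ∀ x y, N.qc x y l = N.q l

/-- The total weight of the local hidden variables. -/
def localWeight (N : HVModel M P p) : ℝ :=
  ∑ l, if N.IsLocalPoint l then N.q l else 0

/-- The total weight of the free hidden variables. -/
def freeWeight (N : HVModel M P p) : ℝ :=
  ∑ l, if N.IsFreePoint l then N.q l else 0

/-- An FHV model: every hidden variable is free. -/
def IsFHV (N : HVModel M P p) : Prop := ∀ l, N.IsFreePoint l

/-- An LHV model: every hidden variable is local. -/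
def IsLHV (N : HVModel M P p) : Prop := ∀ l, N.IsLocalPoint l

end HVModel

/-- Local weights achievable by FHV models of `P` with setting distribution `p`. -/
def FHVLocalWeights (M : ℕ) (P : Bool → Bool → Fin M → Fin M → ℝ)
    (p : Fin M → Fin M → ℝ) : Set ℝ :=
  {w | ∃ N : HVModel M P p, N.IsFHV ∧ w = N.localWeight}

/-- Free weights achievable by LHV models of `P` with setting distribution `p`. -/
def LHVFreeWeights (M : ℕ) (P : Bool → Bool → Fin M → Fin M → ℝ)
    (p : Fin M → Fin M → ℝ) : Set ℝ :=
  {w | ∃ N : HVModel M P p, N.IsLHV ∧ w = N.freeWeight}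

/-- The measure of locality `μ_L`. -/
def muL (M : ℕ) (P : Bool → Bool → Fin M → Fin M → ℝ) : ℝ :=
  ⨅ sp : {f : Fin M → Fin M → ℝ // IsSettingDist f}, sSup (FHVLocalWeights M P sp.1)

/-- The measure of free choice `μ_F`. -/
def muF (M : ℕ) (P : Bool → Bool → Fin M → Fin M → ℝ) : ℝ :=
  ⨅ sp : {f : Fin M → Fin M → ℝ // IsSettingDist f}, sSup (LHVFreeWeights M P sp.1)

/-- A behaviour admits an LHV+FHV model (is local-free). -/
def LocalFree {M N : ℕ} (P : Bool → Bool → Fin M → Fin N → ℝ) : Prop :=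
  ∃ (n : ℕ) (q : Fin n → ℝ) (A : Bool → Fin M → Fin n → ℝ) (B : Bool → Fin N → Fin n → ℝ),
    (∀ l, 0 ≤ q l) ∧ (∑ l, q l = 1) ∧
    (∀ a x l, 0 ≤ A a x l) ∧ (∀ x l, ∑ a, A a x l = 1) ∧
    (∀ b y l, 0 ≤ B b y l) ∧ (∀ y l, ∑ b, B b y l = 1) ∧
    (∀ a b x y, P a b x y = ∑ l, q l * A a x l * B b y l)

lemma exists_mem_stdSimplex_eq_sum_mul {𝕜 ι : Type*} [Field 𝕜] [LinearOrder 𝕜]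
    [IsStrictOrderedRing 𝕜] [Fintype ι] [Nonempty ι] {r : ι → 𝕜} (hr : ∀ i, 0 ≤ r i) :
    ∃ q ∈ stdSimplex 𝕜 ι, ∀ i, r i = (∑ j, r j) * q i := by
  have hsum : 0 ≤ ∑ j, r j := sum_nonneg fun j _ => hr j
  rcases hsum.eq_or_lt with hzero | hpos
  · obtain ⟨i₀⟩ := ‹Nonempty ι›
    refine ⟨Pi.single i₀ 1, single_mem_stdSimplex 𝕜 i₀, fun i => ?_⟩
    rw [← hzero, zero_mul]
    exact (sum_eq_zero_iff_of_nonneg fun j _ => hr j).1 hzero.symm i (mem_univ i)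
  · refine ⟨fun i => r i / ∑ j, r j, ⟨fun i => div_nonneg (hr i) hsum, ?_⟩,
      fun i => (mul_div_cancel₀ _ hpos.ne').symm⟩
    rw [← sum_div, div_self hpos.ne']

lemma append_mem_stdSimplex {𝕜 : Type*} [Ring 𝕜] [PartialOrder 𝕜] [IsOrderedRing 𝕜] {m n : ℕ}
    {u : Fin m → 𝕜} {v : Fin n → 𝕜} (hu : u ∈ stdSimplex 𝕜 (Fin m)) (hv : v ∈ stdSimplex 𝕜 (Fin n))
    {p : 𝕜} (hp : p ∈ Set.Icc (0 : 𝕜) 1) :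
    Fin.append (p • u) ((1 - p) • v) ∈ stdSimplex 𝕜 (Fin (m + n)) := by
  constructor
  · refine Fin.addCases (fun i => ?_) fun j => ?_
    · simpa using mul_nonneg hp.1 (hu.1 i)
    · simpa using mul_nonneg (sub_nonneg.2 hp.2) (hv.1 j)
  · simp [Fin.sum_univ_add, ← mul_sum, hu.2, hv.2]

/-- A product behaviour: the outcome distribution factorises into one-sided responses. These are the
behaviours of single local hidden variables. -/
def IsProductBehaviour {M N : ℕ} (R : Bool → Bool → Fin M → Fin N → ℝ) : Prop :=
  ∃ (α : Bool → Fin M → ℝ) (β : Bool → Fin N → ℝ),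
    (∀ a x, 0 ≤ α a x) ∧ (∀ x, ∑ a, α a x = 1) ∧
    (∀ b y, 0 ≤ β b y) ∧ (∀ y, ∑ b, β b y = 1) ∧
    (∀ a b x y, R a b x y = α a x * β b y)

section Behaviours

variable {M N : ℕ}

lemma IsProductBehaviour.isBehaviour {R : Bool → Bool → Fin M → Fin N → ℝ}
    (hR : IsProductBehaviour R) : IsBehaviour R := by
  obtain ⟨α, β, hα, hα_sum, hβ, hβ_sum, hR⟩ := hR
  refine ⟨fun a b x y => ?_, fun x y => ?_⟩
  · rw [hR]
    exact mul_nonneg (hα a x) (hβ b y)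
  · simp_rw [hR, ← sum_mul_sum, hα_sum, hβ_sum, one_mul]

lemma IsBehaviour.sum_mul_of_mem_stdSimplex {ι : Type*} [Fintype ι]
    {R : ι → Bool → Bool → Fin M → Fin N → ℝ} (hR : ∀ l, IsBehaviour (R l))
    {q : Fin M → Fin N → ι → ℝ} (hq : ∀ x y, q x y ∈ stdSimplex ℝ ι) :
    IsBehaviour fun a b x y => ∑ l, R l a b x y * q x y l := by
  refine ⟨fun a b x y => sum_nonneg fun l _ => mul_nonneg ((hR l).1 a b x y) ((hq x y).1 l),
    fun x y => ?_⟩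
  calc ∑ a, ∑ b, ∑ l, R l a b x y * q x y l
      = ∑ l, (∑ a, ∑ b, R l a b x y) * q x y l := by
        simp only [Fintype.sum_bool, sum_add_distrib, add_mul]
    _ = 1 := by simp only [(hR _).2, one_mul, (hq x y).2]

lemma localFree_iff_exists_sum_isProductBehaviour {P : Bool → Bool → Fin M → Fin N → ℝ} :
    LocalFree P ↔ ∃ (n : ℕ) (q : Fin n → ℝ) (R : Fin n → Bool → Bool → Fin M → Fin N → ℝ),
      q ∈ stdSimplex ℝ (Fin n) ∧ (∀ l, IsProductBehaviour (R l)) ∧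
      ∀ a b x y, P a b x y = ∑ l, R l a b x y * q l := by
  constructor
  · rintro ⟨n, q, A, B, hq, hq_sum, hA, hA_sum, hB, hB_sum, hP⟩
    refine ⟨n, q, fun l a b x y => A a x l * B b y l, ⟨hq, hq_sum⟩, fun l =>
      ⟨fun a x => A a x l, fun b y => B b y l, fun a x => hA a x l, fun x => hA_sum x l,
        fun b y => hB b y l, fun y => hB_sum y l, fun _ _ _ _ => rfl⟩, fun a b x y => ?_⟩
    rw [hP]
    exact sum_congr rfl fun l _ => by ring
  · rintro ⟨n, q, R, hq, hR, hP⟩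
    choose α β hα hα_sum hβ hβ_sum hR using hR
    refine ⟨n, q, fun a x l => α l a x, fun b y l => β l b y, hq.1, hq.2, fun a x l => hα l a x,
      fun x l => hα_sum l x, fun b y l => hβ l b y, fun y l => hβ_sum l y, fun a b x y => ?_⟩
    rw [hP]
    exact sum_congr rfl fun l _ => by rw [hR]; ring

lemma LocalFree.isBehaviour {P : Bool → Bool → Fin M → Fin N → ℝ} (hP : LocalFree P) :
    IsBehaviour P := by
  obtain ⟨n, q, R, hq, hR, hP⟩ := localFree_iff_exists_sum_isProductBehaviour.1 hP
  obtain rfl : P = fun a b x y => ∑ l, R l a b x y * q l := by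
    ext a b x y
    exact hP a b x y
  exact IsBehaviour.sum_mul_of_mem_stdSimplex (fun l => (hR l).isBehaviour) fun _ _ => hq

end Behaviours

lemma IsSettingDist.sum_const_mul {M : ℕ} {p : Fin M → Fin M → ℝ} (hp : IsSettingDist p) (c : ℝ) :
    ∑ x, ∑ y, c * p x y = c := by
  simp_rw [← mul_sum, hp.2, mul_one]

namespace HVModel

variable {M : ℕ} {P : Bool → Bool → Fin M → Fin M → ℝ} {p : Fin M → Fin M → ℝ}

/-- The hidden-variable model given by the conditional distributions `w x y` of the hidden variable
and its responses `R`. The distribution of the hidden variable is computed as the marginal of `w`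
under `p`, so that the same `w` and `R` serve every setting distribution. -/
def ofConditional (hp : IsSettingDist p) {n : ℕ} (w : Fin M → Fin M → Fin n → ℝ)
    (R : Fin n → Bool → Bool → Fin M → Fin M → ℝ) (hw : ∀ x y, w x y ∈ stdSimplex ℝ (Fin n))
    (hR : ∀ l, IsBehaviour (R l)) (hP : ∀ a b x y, P a b x y = ∑ l, R l a b x y * w x y l) :
    HVModel M P p where
  n := n
  q l := ∑ x, ∑ y, w x y l * p x y
  q_nonneg l := sum_nonneg fun x _ => sum_nonneg fun y _ => mul_nonneg ((hw x y).1 l) (hp.1 x y).le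
  q_sum := by
    calc ∑ l, ∑ x, ∑ y, w x y l * p x y = ∑ x, ∑ y, (∑ l, w x y l) * p x y := by
          rw [sum_comm]
          refine sum_congr rfl fun x _ => ?_
          simp_rw [sum_mul]
          exact sum_comm
      _ = 1 := by simp_rw [(hw _ _).2, hp.sum_const_mul]
  qc := w
  qc_nonneg x y := (hw x y).1
  qc_sum x y := (hw x y).2
  q_marg _ := rfl
  Pc := R
  Pc_nonneg l := (hR l).1
  Pc_sum l := (hR l).2
  reproduce := hP

variable (N : HVModel M P p)

lemma qc_mem_stdSimplex (x y : Fin M) : N.qc x y ∈ stdSimplex ℝ (Fin N.n) :=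
  ⟨N.qc_nonneg x y, N.qc_sum x y⟩

lemma isBehaviour_Pc (l : Fin N.n) : IsBehaviour (N.Pc l) :=
  ⟨N.Pc_nonneg l, N.Pc_sum l⟩

lemma isLHV_iff_forall_isProductBehaviour : N.IsLHV ↔ ∀ l, IsProductBehaviour (N.Pc l) :=
  Iff.rfl

lemma q_eq_of_qc_eq_const (hp : IsSettingDist p) {l : Fin N.n} {c : ℝ}
    (hc : ∀ x y, N.qc x y l = c) : N.q l = c := by
  simp_rw [N.q_marg, hc, hp.sum_const_mul]

instance : Nonempty (Fin N.n) := by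
  by_contra hempty
  rw [not_nonempty_iff] at hempty
  simpa using N.q_sum

/-- The restriction of the hidden-variable distribution to the free points, a subprobability
distribution of mass `N.freeWeight`. -/
def freePart (l : Fin N.n) : ℝ := if N.IsFreePoint l then N.q l else 0

lemma sum_freePart : ∑ l, N.freePart l = N.freeWeight := rfl

lemma freePart_nonneg (l : Fin N.n) : 0 ≤ N.freePart l :=
  ite_nonneg (N.q_nonneg l) le_rfl

lemma freePart_of_isFreePoint {l : Fin N.n} (hl : N.IsFreePoint l) : N.freePart l = N.q l :=
  if_pos hl

lemma freePart_eq_of_qc_eq_const (hp : IsSettingDist p) {l : Fin N.n} {c : ℝ}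
    (hc : ∀ x y, N.qc x y l = c) : N.freePart l = c := by
  have hq : N.q l = c := N.q_eq_of_qc_eq_const hp hc
  rw [N.freePart_of_isFreePoint fun x y => (hc x y).trans hq.symm, hq]

lemma freePart_le_qc (x y : Fin M) (l : Fin N.n) : N.freePart l ≤ N.qc x y l := by
  by_cases hl : N.IsFreePoint l
  · rw [N.freePart_of_isFreePoint hl, hl x y]
  · rw [freePart, if_neg hl]
    exact N.qc_nonneg x y l

lemma freePart_le_q (l : Fin N.n) : N.freePart l ≤ N.q l := by
  rw [freePart]
  split_ifs
  exacts [le_rfl, N.q_nonneg l]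

lemma freeWeight_mem_Icc : N.freeWeight ∈ Set.Icc (0 : ℝ) 1 :=
  ⟨sum_nonneg fun l _ => N.freePart_nonneg l,
    (sum_le_sum fun l _ => N.freePart_le_q l).trans_eq N.q_sum⟩

lemma exists_qc_eq_freeWeight_mul_add :
    ∃ q₁ ∈ stdSimplex ℝ (Fin N.n), ∃ q₂ : Fin M → Fin M → Fin N.n → ℝ,
      (∀ x y, q₂ x y ∈ stdSimplex ℝ (Fin N.n)) ∧
      ∀ x y l, N.qc x y l = N.freeWeight * q₁ l + (1 - N.freeWeight) * q₂ x y l := by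
  obtain ⟨q₁, hq₁, hfree⟩ := exists_mem_stdSimplex_eq_sum_mul N.freePart_nonneg
  have hrest (x y : Fin M) := exists_mem_stdSimplex_eq_sum_mul
    fun l => sub_nonneg.2 (N.freePart_le_qc x y l)
  choose q₂ hq₂ hrest using hrest
  refine ⟨q₁, hq₁, q₂, hq₂, fun x y l => ?_⟩
  rw [← N.sum_freePart, ← hfree, ← N.qc_sum x y, ← sum_sub_distrib, ← hrest, add_sub_cancel]

variable {N}

lemma IsLHV.exists_decomposition (hN : N.IsLHV) (hp : IsSettingDist p) :
    ∃ PF Q : Bool → Bool → Fin M → Fin M → ℝ, LocalFree PF ∧ IsBehaviour Q ∧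
      (∃ NQ : HVModel M Q p, NQ.IsLHV) ∧
      ∀ a b x y, P a b x y = N.freeWeight * PF a b x y + (1 - N.freeWeight) * Q a b x y := by
  obtain ⟨q₁, hq₁, q₂, hq₂, hqc⟩ := N.exists_qc_eq_freeWeight_mul_add
  refine ⟨fun a b x y => ∑ l, N.Pc l a b x y * q₁ l, fun a b x y => ∑ l, N.Pc l a b x y * q₂ x y l,
    localFree_iff_exists_sum_isProductBehaviour.2
      ⟨N.n, q₁, N.Pc, hq₁, N.isLHV_iff_forall_isProductBehaviour.1 hN, fun _ _ _ _ => rfl⟩,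
    IsBehaviour.sum_mul_of_mem_stdSimplex N.isBehaviour_Pc hq₂,
    ⟨ofConditional hp q₂ N.Pc hq₂ N.isBehaviour_Pc fun _ _ _ _ => rfl, hN⟩, fun a b x y => ?_⟩
  simp_rw [N.reproduce, hqc, mul_sum, ← sum_add_distrib]
  exact sum_congr rfl fun l _ => by ring

lemma IsLHV.exists_le_freeWeight_of_mixture {PF Q : Bool → Bool → Fin M → Fin M → ℝ}
    {ps : Fin M → Fin M → ℝ} {NQ : HVModel M Q ps} (hNQ : NQ.IsLHV) (hPF : LocalFree PF)
    (hp : IsSettingDist p) {t : ℝ} (ht : t ∈ Set.Icc (0 : ℝ) 1)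
    (hP : ∀ a b x y, P a b x y = t * PF a b x y + (1 - t) * Q a b x y) :
    ∃ N : HVModel M P p, N.IsLHV ∧ t ≤ N.freeWeight := by
  obtain ⟨n, q, R, hq, hR, hPF⟩ := localFree_iff_exists_sum_isProductBehaviour.1 hPF
  let w : Fin M → Fin M → Fin (n + NQ.n) → ℝ := fun x y =>
    Fin.append (t • q) ((1 - t) • NQ.qc x y)
  let S : Fin (n + NQ.n) → Bool → Bool → Fin M → Fin M → ℝ := Fin.append R NQ.Pc
  have hS : ∀ l, IsProductBehaviour (S l) :=
    Fin.addCases (fun i => by simpa only [S, Fin.append_left] using hR i) fun j => by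
      simpa only [S, Fin.append_right] using NQ.isLHV_iff_forall_isProductBehaviour.1 hNQ j
  have hrep (a b : Bool) (x y : Fin M) : P a b x y = ∑ l, S l a b x y * w x y l := by
    simp only [hP, hPF, NQ.reproduce, S, w, Fin.sum_univ_add, Fin.append_left, Fin.append_right,
      Pi.smul_apply, smul_eq_mul, mul_sum, mul_left_comm]
  let N : HVModel M P p := ofConditional hp w S
    (fun x y => append_mem_stdSimplex hq (NQ.qc_mem_stdSimplex x y) ht)
    (fun l => (hS l).isBehaviour) hrep
  have hfree (i : Fin n) : N.freePart (Fin.castAdd NQ.n i) = t * q i :=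
    N.freePart_eq_of_qc_eq_const hp fun x y => Fin.append_left (t • q) ((1 - t) • NQ.qc x y) i
  refine ⟨N, N.isLHV_iff_forall_isProductBehaviour.2 hS, ?_⟩
  calc t = ∑ i, N.freePart (Fin.castAdd NQ.n i) := by
        simp_rw [hfree, ← mul_sum, hq.2, mul_one]
    _ ≤ ∑ i, N.freePart (Fin.castAdd NQ.n i) + ∑ j, N.freePart (Fin.natAdd n j) :=
        le_add_of_nonneg_right (sum_nonneg fun j _ => N.freePart_nonneg _)
    _ = N.freeWeight := (Fin.sum_univ_add N.freePart).symm

end HVModel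

/-- The weights `t` of the decompositions `P = t P_F + (1 - t) Q` into a local-free behaviour and
one with an LHV model; `Q` may use a setting distribution of its own. -/
def decompositionWeights {M : ℕ} (P : Bool → Bool → Fin M → Fin M → ℝ) : Set ℝ :=
  {t : ℝ | t ∈ Set.Icc (0 : ℝ) 1 ∧
    ∃ PF Q : Bool → Bool → Fin M → Fin M → ℝ,
      IsBehaviour PF ∧ LocalFree PF ∧ IsBehaviour Q ∧
      (∃ ps : Fin M → Fin M → ℝ, IsSettingDist ps ∧ ∃ NQ : HVModel M Q ps, NQ.IsLHV) ∧
      ∀ a b x y, P a b x y = t * PF a b x y + (1 - t) * Q a b x y}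

section DecompositionWeights

variable {M : ℕ} (P : Bool → Bool → Fin M → Fin M → ℝ)

lemma sSup_LHVFreeWeights_eq_sSup_decompositionWeights {p : Fin M → Fin M → ℝ}
    (hp : IsSettingDist p) : sSup (LHVFreeWeights M P p) = sSup (decompositionWeights P) := by
  apply csSup_eq_csSup_of_forall_exists_le
  · rintro _ ⟨N, hN, rfl⟩
    obtain ⟨PF, Q, hPF, hQ, hNQ, hP⟩ := hN.exists_decomposition hp
    exact ⟨N.freeWeight, ⟨N.freeWeight_mem_Icc, PF, Q, hPF.isBehaviour, hPF, hQ, ⟨p, hp, hNQ⟩, hP⟩,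
      le_rfl⟩
  · rintro t ⟨ht, PF, Q, -, hPF, -, ⟨ps, -, NQ, hNQ⟩, hP⟩
    obtain ⟨N, hN, hle⟩ := hNQ.exists_le_freeWeight_of_mixture hPF hp ht hP
    exact ⟨N.freeWeight, ⟨N, hN, rfl⟩, hle⟩

lemma decompositionWeights_eq_empty [IsEmpty {f : Fin M → Fin M → ℝ // IsSettingDist f}] :
    decompositionWeights P = ∅ := by
  refine Set.eq_empty_of_forall_notMem ?_
  rintro t ⟨-, PF, Q, -, -, -, ⟨ps, hps, -⟩, -⟩
  exact isEmptyElim (⟨ps, hps⟩ : {f : Fin M → Fin M → ℝ // IsSettingDist f})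

end DecompositionWeights

theorem muF_eq_sup_decompositions (M : ℕ)
    (P : Bool → Bool → Fin M → Fin M → ℝ) (hP : IsBehaviour P) :
    muF M P = sSup {p : ℝ | p ∈ Set.Icc (0 : ℝ) 1 ∧
      ∃ PF Q : Bool → Bool → Fin M → Fin M → ℝ,
        IsBehaviour PF ∧ LocalFree PF ∧ IsBehaviour Q ∧
        (∃ ps : Fin M → Fin M → ℝ, IsSettingDist ps ∧
          ∃ NQ : HVModel M Q ps, NQ.IsLHV) ∧
        ∀ a b x y, P a b x y = p * PF a b x y + (1 - p) * Q a b x y} := by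
  change muF M P = sSup (decompositionWeights P)
  rw [muF]
  rcases isEmpty_or_nonempty {f : Fin M → Fin M → ℝ // IsSettingDist f} with hempty | hnonempty
  · -- There is no setting distribution for `M = 0`: both sides are then `0` by convention.
    rw [decompositionWeights_eq_empty, Real.sSup_empty, Real.iInf_of_isEmpty]
  · calc ⨅ sp : {f : Fin M → Fin M → ℝ // IsSettingDist f}, sSup (LHVFreeWeights M P sp.1)
        = ⨅ _ : {f : Fin M → Fin M → ℝ // IsSettingDist f}, sSup (decompositionWeights P) :=
          iInf_congr fun sp => sSup_LHVFreeWeights_eq_sSup_decompositionWeights P sp.2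
      _ = sSup (decompositionWeights P) := ciInf_const
end
end

section
/- Let P be a behaviour with two settings x,y ∈ {0,1}. If P decomposes pointwise as P = p·P_L + (1−p)·Q with p ∈ [0,1], P_L a behaviour admitting an LHV+FHV model, and Q an arbitrary behaviour, then p ≤ (4 − |S_i(P)|)/2 for each i = 1,…,4, where S_i(P) are the CHSH expressions of P. -/
/-!
At a fixed hidden variable the correlator of an LHV+FHV model factorizes as `α x * β y` with
`|α x| ≤ 1` and `|β y| ≤ 1`, so each CHSH expression is at most `2` in absolute value, and averaging
over the hidden variable preserves this bound. For an arbitrary behaviour only the algebraic bound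
`4` is available. CHSH expressions are linear in the behaviour, hence `|S| ≤ p * 2 + (1 - p) * 4`.
-/

open scoped BigOperators Classical
open Finset

noncomputable section

/-- The correlator `⟨ab⟩_{xy}`. -/
def corr {M N : ℕ} (P : Bool → Bool → Fin M → Fin N → ℝ) (x : Fin M) (y : Fin N) : ℝ :=
  ∑ a, ∑ b, outVal a * outVal b * P a b x y

/-- Non-signalling for a two-setting behaviour. -/
def NonSignalling (P : Bool → Bool → Fin 2 → Fin 2 → ℝ) : Prop :=
  (∀ a x y y', ∑ b, P a b x y = ∑ b, P a b x y') ∧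
  (∀ b y x x', ∑ a, P a b x y = ∑ a, P a b x' y)

def S1 (P : Bool → Bool → Fin 2 → Fin 2 → ℝ) : ℝ :=
  corr P 0 0 + corr P 0 1 + corr P 1 0 - corr P 1 1

def S2 (P : Bool → Bool → Fin 2 → Fin 2 → ℝ) : ℝ :=
  corr P 0 0 + corr P 0 1 - corr P 1 0 + corr P 1 1

def S3 (P : Bool → Bool → Fin 2 → Fin 2 → ℝ) : ℝ :=
  corr P 0 0 - corr P 0 1 + corr P 1 0 + corr P 1 1

def S4 (P : Bool → Bool → Fin 2 → Fin 2 → ℝ) : ℝ :=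
  -corr P 0 0 + corr P 0 1 + corr P 1 0 + corr P 1 1

/-- Maximal absolute value of the four CHSH expressions. -/
def Smax (P : Bool → Bool → Fin 2 → Fin 2 → ℝ) : ℝ :=
  max (max |S1 P| |S2 P|) (max |S3 P| |S4 P|)

lemma abs_sum_mul_le_of_sum_eq_one {R ι : Type*} [Ring R] [LinearOrder R] [IsOrderedRing R]
    {s : Finset ι} {w f : ι → R} {c : R} (hw : ∀ i ∈ s, 0 ≤ w i) (hw_sum : ∑ i ∈ s, w i = 1)
    (hf : ∀ i ∈ s, |f i| ≤ c) : |∑ i ∈ s, w i * f i| ≤ c :=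
  calc
    |∑ i ∈ s, w i * f i| ≤ ∑ i ∈ s, |w i * f i| := abs_sum_le_sum_abs _ _
    _ ≤ ∑ i ∈ s, w i * c := sum_le_sum fun i hi => by
      rw [abs_mul, abs_of_nonneg (hw i hi)]
      exact mul_le_mul_of_nonneg_left (hf i hi) (hw i hi)
    _ = c := by rw [← sum_mul, hw_sum, one_mul]

section CHSH

variable {R X Y ι : Type*} [CommRing R]

/-- The CHSH expression of a table of correlators `E`, formed from the settings `x, x'` of one party
and `y, y'` of the other; the minus sign is attached to the pair `(x', y')`. The four CHSH
expressions of a two-setting behaviour differ only in the order of the settings. -/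
def chsh (E : X → Y → R) (x x' : X) (y y' : Y) : R :=
  E x y + E x y' + E x' y - E x' y'

lemma chsh_mul_add_mul (c d : R) (E F : X → Y → R) (x x' : X) (y y' : Y) :
    chsh (fun x y => c * E x y + d * F x y) x x' y y' =
      c * chsh E x x' y y' + d * chsh F x x' y y' := by
  unfold chsh
  ring

lemma chsh_sum_mul (s : Finset ι) (w : ι → R) (E : ι → X → Y → R) (x x' : X) (y y' : Y) :
    chsh (fun x y => ∑ i ∈ s, w i * E i x y) x x' y y' =
      ∑ i ∈ s, w i * chsh (E i) x x' y y' := by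
  simp only [chsh, mul_add, mul_sub, sum_add_distrib, sum_sub_distrib]

variable [LinearOrder R] [IsStrictOrderedRing R]

lemma abs_chsh_le_four {E : X → Y → R} (hE : ∀ x y, |E x y| ≤ 1) (x x' : X) (y y' : Y) :
    |chsh E x x' y y'| ≤ 4 := by
  have bounds (x : X) (y : Y) : -1 ≤ E x y ∧ E x y ≤ 1 := abs_le.1 (hE x y)
  unfold chsh
  rw [abs_le]
  constructor <;> linarith [bounds x y, bounds x y', bounds x' y, bounds x' y']

lemma abs_add_add_abs_sub_le_two {b b' : R} (hb : |b| ≤ 1) (hb' : |b'| ≤ 1) :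
    |b + b'| + |b - b'| ≤ 2 := by
  -- The left-hand side is `2 * max |b| |b'|`.
  rw [abs_le] at hb hb'
  rcases abs_cases (b + b') with h | h <;> rcases abs_cases (b - b') with h' | h' <;> linarith

lemma abs_chsh_mul_le_two {α : X → R} {β : Y → R} (hα : ∀ x, |α x| ≤ 1) (hβ : ∀ y, |β y| ≤ 1)
    (x x' : X) (y y' : Y) : |chsh (fun x y => α x * β y) x x' y y'| ≤ 2 :=
  calc
    |chsh (fun x y => α x * β y) x x' y y'|
      = |α x * (β y + β y') + α x' * (β y - β y')| := by
        unfold chsh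
        ring_nf
    _ ≤ |α x| * |β y + β y'| + |α x'| * |β y - β y'| := by
        simpa only [abs_mul] using abs_add_le (α x * (β y + β y')) (α x' * (β y - β y'))
    _ ≤ |β y + β y'| + |β y - β y'| :=
        add_le_add (mul_le_of_le_one_left (abs_nonneg _) (hα x))
          (mul_le_of_le_one_left (abs_nonneg _) (hα x'))
    _ ≤ 2 := abs_add_add_abs_sub_le_two (hβ y) (hβ y')

end CHSH

lemma abs_outVal (a : Bool) : |outVal a| = 1 := by
  cases a <;> simp [outVal]

/-- The expectation of a `±1`-valued outcome with distribution `D`. At a fixed hidden variable the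
correlator of a local-free behaviour is the product of two such expectations. -/
def meanOutcome (D : Bool → ℝ) : ℝ := ∑ a, D a * outVal a

lemma abs_meanOutcome_le_one {D : Bool → ℝ} (hD : ∀ a, 0 ≤ D a) (hD_sum : ∑ a, D a = 1) :
    |meanOutcome D| ≤ 1 :=
  abs_sum_mul_le_of_sum_eq_one (fun a _ => hD a) hD_sum fun a _ => (abs_outVal a).le

section Correlators

variable {M N : ℕ} {P P₁ P₂ : Bool → Bool → Fin M → Fin N → ℝ}

lemma IsBehaviour.abs_corr_le_one (hP : IsBehaviour P) (x : Fin M) (y : Fin N) :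
    |corr P x y| ≤ 1 := by
  have corr_eq : corr P x y = ∑ o : Bool × Bool, P o.1 o.2 x y * (outVal o.1 * outVal o.2) := by
    simp only [corr, Fintype.sum_prod_type, mul_comm]
  rw [corr_eq]
  refine abs_sum_mul_le_of_sum_eq_one (fun o _ => hP.1 o.1 o.2 x y) ?_ fun o _ => ?_
  · rw [Fintype.sum_prod_type, hP.2 x y]
  · rw [abs_mul, abs_outVal, abs_outVal, one_mul]

lemma corr_eq_mul_add_mul {c d : ℝ} {x : Fin M} {y : Fin N}
    (h : ∀ a b, P a b x y = c * P₁ a b x y + d * P₂ a b x y) :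
    corr P x y = c * corr P₁ x y + d * corr P₂ x y := by
  simp only [corr, h, mul_add, sum_add_distrib, mul_sum, mul_left_comm]

lemma corr_eq_sum_mul_meanOutcome {ι : Type*} [Fintype ι] {q : ι → ℝ} {A B : Bool → ι → ℝ}
    {x : Fin M} {y : Fin N} (h : ∀ a b, P a b x y = ∑ l, q l * A a l * B b l) :
    corr P x y = ∑ l, q l * (meanOutcome (A · l) * meanOutcome (B · l)) := by
  simp only [corr, meanOutcome, h, Fintype.sum_bool, mul_sum, ← sum_add_distrib]
  exact sum_congr rfl fun l _ => by ring

lemma LocalFree.abs_chsh_corr_le_two (hP : LocalFree P) (x x' : Fin M) (y y' : Fin N) :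
    |chsh (corr P) x x' y y'| ≤ 2 := by
  obtain ⟨n, q, A, B, hq, hq_sum, hA, hA_sum, hB, hB_sum, hPAB⟩ := hP
  have corr_eq : corr P =
      fun x y => ∑ l, q l * (meanOutcome (A · x l) * meanOutcome (B · y l)) := by
    ext x y
    exact corr_eq_sum_mul_meanOutcome fun a b => hPAB a b x y
  rw [corr_eq, chsh_sum_mul]
  refine abs_sum_mul_le_of_sum_eq_one (fun l _ => hq l) hq_sum fun l _ => ?_
  exact abs_chsh_mul_le_two
    (fun x => abs_meanOutcome_le_one (fun a => hA a x l) (hA_sum x l))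
    (fun y => abs_meanOutcome_le_one (fun b => hB b y l) (hB_sum y l)) x x' y y'

lemma decomposition_CHSH_bound_general {p : ℝ} (hp : p ∈ Set.Icc (0 : ℝ) 1) (hP₁ : LocalFree P₁)
    (hP₂ : IsBehaviour P₂) (hP : ∀ a b x y, P a b x y = p * P₁ a b x y + (1 - p) * P₂ a b x y)
    (x x' : Fin M) (y y' : Fin N) : p ≤ (4 - |chsh (corr P) x x' y y'|) / 2 := by
  have corr_eq : corr P = fun x y => p * corr P₁ x y + (1 - p) * corr P₂ x y := by
    ext x y
    exact corr_eq_mul_add_mul fun a b => hP a b x y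
  have hp' : 0 ≤ 1 - p := sub_nonneg.2 hp.2
  have chsh_le : |chsh (corr P) x x' y y'| ≤ p * 2 + (1 - p) * 4 := calc
    |chsh (corr P) x x' y y'|
      = |p * chsh (corr P₁) x x' y y' + (1 - p) * chsh (corr P₂) x x' y y'| := by
        rw [corr_eq, chsh_mul_add_mul]
    _ ≤ p * |chsh (corr P₁) x x' y y'| + (1 - p) * |chsh (corr P₂) x x' y y'| := by
        simpa only [abs_mul, abs_of_nonneg hp.1, abs_of_nonneg hp'] using
          abs_add_le (p * chsh (corr P₁) x x' y y') ((1 - p) * chsh (corr P₂) x x' y y')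
    _ ≤ p * 2 + (1 - p) * 4 :=
        add_le_add (mul_le_mul_of_nonneg_left (hP₁.abs_chsh_corr_le_two x x' y y') hp.1)
          (mul_le_mul_of_nonneg_left (abs_chsh_le_four hP₂.abs_corr_le_one x x' y y') hp')
  linarith

end Correlators

section TwoSettings

variable (P : Bool → Bool → Fin 2 → Fin 2 → ℝ)

lemma S1_eq_chsh : S1 P = chsh (corr P) 0 1 0 1 := rfl

lemma S2_eq_chsh : S2 P = chsh (corr P) 0 1 1 0 := by
  unfold S2 chsh
  ring

lemma S3_eq_chsh : S3 P = chsh (corr P) 1 0 0 1 := by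
  unfold S3 chsh
  ring

lemma S4_eq_chsh : S4 P = chsh (corr P) 1 0 1 0 := by
  unfold S4 chsh
  ring

end TwoSettings

theorem decomposition_CHSH_bound (P PL Q : Bool → Bool → Fin 2 → Fin 2 → ℝ)
    (hP : IsBehaviour P) (hPL : IsBehaviour PL) (hQ : IsBehaviour Q)
    (hLF : LocalFree PL) (p : ℝ) (hp : p ∈ Set.Icc (0 : ℝ) 1)
    (hdec : ∀ a b x y, P a b x y = p * PL a b x y + (1 - p) * Q a b x y) :
    p ≤ (4 - |S1 P|) / 2 ∧ p ≤ (4 - |S2 P|) / 2 ∧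
      p ≤ (4 - |S3 P|) / 2 ∧ p ≤ (4 - |S4 P|) / 2 := by
  have bound := decomposition_CHSH_bound_general hp hLF hQ hdec
  rw [S1_eq_chsh, S2_eq_chsh, S3_eq_chsh, S4_eq_chsh]
  exact ⟨bound 0 1 0 1, bound 0 1 1 0, bound 1 0 0 1, bound 1 0 1 0⟩
end
end
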